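/- arXiv:2303.06014 — 6 statements merged into one kernel-verified Lean document; each statement's English description precedes it below -/
import Mathlib

section
/- Let R be a complete commutative normed ring (so the norm is submultiplicative). Let u ∈ R, let (uₙ) be a sequence of units of R whose images in R converge to u, and suppose there is a constant C ≥ 0 such that ‖((uₙ)⁻¹)^k‖ ≤ C^k for all n ∈ ℕ and all k ≥ 1. Then u is a unit of R. -/
/-- In a complete commutative normed ring, if a sequence of units `v n` converges to `u`
and the powers of the inverses satisfy a uniform geometric bound `‖(v n)⁻¹ ^ k‖ ≤ C ^ k`,
then `u` is a unit. -/
theorem isUnit_of_tendsto_units_of_pow_inv_bound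
    {R : Type*} [NormedCommRing R] [CompleteSpace R]
    (u : R) (v : ℕ → Rˣ)
    (hconv : Filter.Tendsto (fun n => ((v n : Rˣ) : R)) Filter.atTop (nhds u))
    (C : ℝ) (hC : 0 ≤ C)
    (hbound : ∀ n k : ℕ, 1 ≤ k → ‖((((v n)⁻¹ : Rˣ) : R)) ^ k‖ ≤ C ^ k) :
    IsUnit u := by
  have hlim : Filter.Tendsto (fun n => C * ‖(v n : R) - u‖) Filter.atTop (nhds 0) := by
    simpa using (tendsto_iff_norm_sub_tendsto_zero.mp hconv).const_mul C
  obtain ⟨n, hn⟩ := (hlim.eventually (gt_mem_nhds one_pos)).exists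
  -- The exponent `k = 1` already bounds `‖(v n)⁻¹‖`, so `1 - (v n)⁻¹ u` has norm `< 1`.
  have hinv : ‖(((v n)⁻¹ : Rˣ) : R)‖ ≤ C := by simpa using hbound n 1 le_rfl
  have hlt : ‖(((v n)⁻¹ : Rˣ) : R) * ((v n : R) - u)‖ < 1 :=
    ((norm_mul_le _ _).trans (by gcongr)).trans_lt hn
  have hunit := isUnit_one_sub_of_norm_lt_one hlt
  rw [mul_sub, Units.inv_mul, sub_sub_cancel] at hunit
  exact (Units.isUnit_units_mul _ u).mp hunit
end

section
/- Let Ω be a complete, nontrivially normed, ultrametric field of characteristic 0, and let d : Ω → Ω be a bounded additive map satisfying the Leibniz rule d(ab) = a·d(b) + d(a)·b, with d ≠ 0. Let n ≥ 1, let M = Ωⁿ with the sup norm, and let ∇ and ∇_l (l ∈ ℕ) be bounded additive maps M → M satisfying ∇(a • m) = d(a) • m + a • ∇(m) for all a ∈ Ω, m ∈ M (and likewise for each ∇_l). Assume ∇_l → ∇ in operator norm, i.e. there are real ε_l → 0 with ‖∇_l v − ∇ v‖ ≤ ε_l‖v‖ for all v ∈ M. Then there exist a vector m ∈ M that is cyclic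 for ∇ and a sequence (m_l) in M such that m_l is cyclic for ∇_l for every l and m_l → m in M. -/
open Filter

/-!
Only the existence of a cyclic vector for a single connection carries content. Given a cyclic
vector `m` of `D`, the iterates `Dₗ^k m` converge to `D^k m`, so the determinant of
`(m, Dₗ m, …, Dₗ^(n-1) m)` converges to a nonzero limit and `m` itself is cyclic for `Dₗ` for
all large `l`; for the finitely many remaining `l` any cyclic vector of `Dₗ` will do.

Existence (`exists_cyclic`) is Katz's argument. After rescaling by `(d f)⁻¹`, which does not
change the spans of initial iterates (`iterate_mem_span`), one may assume `d f = 1`. For vectors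
`b i j` with `b (i+1) j = D (b i j) + b i (j+1)`, the polynomial vectors
`mᵢ(X) = ∑ⱼ b i j X^j / j!` satisfy `D (mᵢ(x)) = mᵢ₊₁(x)` whenever `d x = 1`. Katz's
coefficients `b 0 j` are the ones making `mᵢ(0) = eᵢ` for `i < n`, so `det (mᵢ(X))` is a polynomial
with value `1` at `0`. It therefore does not vanish at some `x = f + k`, `k ∈ ℕ`, and `m₀(x)` is
cyclic there.
-/

/-- The array with rows `i` and columns `j` determined by `katzA D e 0 i = e i` and
`katzA D e (j+1) i = katzA D e j (i+1) - D (katzA D e j i)`; the column index comes first. For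
additive `D` it is given in closed form by `katzA D e j i = ∑ₖ (-1)^k binom(j,k) D^k (e (i+j-k))`. -/
def katzA {V : Type*} [AddCommGroup V] (D : V → V) (e : ℕ → V) : ℕ → ℕ → V
  | 0 => e
  | j + 1 => fun i => katzA D e j (i + 1) - D (katzA D e j i)

/-- `katzB D e n i j` is `j!` times the coefficient of `X^j` in the `i`-th derivative of Katz's
polynomial vector `∑_{j<n} katzA D e j 0 X^j / j!`, for the derivation acting as `D` on coefficients
and as `d/dX` on `X`. -/
def katzB {V : Type*} [AddCommGroup V] (D : V → V) (e : ℕ → V) (n : ℕ) : ℕ → ℕ → V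
  | 0 => fun j => if j < n then katzA D e j 0 else 0
  | i + 1 => fun j => D (katzB D e n i j) + katzB D e n i (j + 1)

/-- Truncating Katz's series at degree `n` does not affect the entries with `i + j < n`. -/
lemma katzB_eq_katzA {V : Type*} [AddCommGroup V] (D : V → V) (e : ℕ → V) (n i : ℕ) :
    ∀ j, i + j < n → katzB D e n i j = katzA D e j i := by
  induction i with
  | zero => intro j hj; simp [katzB, show j < n by omega]
  | succ i ih =>
    intro j hj
    simp only [katzB]
    rw [ih j (by omega), ih (j + 1) (by omega)]
    simp [katzA]

lemma katzB_eq_zero {V : Type*} [AddCommGroup V] (D : V → V) (hD : D 0 = 0) (e : ℕ → V)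
    (n i : ℕ) : ∀ j, n ≤ j → katzB D e n i j = 0 := by
  induction i with
  | zero => intro j hj; simp [katzB, show ¬ j < n by omega]
  | succ i ih =>
    intro j hj
    simp only [katzB]
    rw [ih j hj, ih (j + 1) (by omega), hD, add_zero]

/-- At a point `x` with `d x = 1`, applying `D` to the value of the `i`-th polynomial vector gives
the value of the next one. -/
lemma katz_step {K V : Type*} [Field K] [CharZero K] [AddCommGroup V] [Module K V]
    (d : Derivation ℤ K K) (D : V →+ V)
    (hD : ∀ (a : K) (v : V), D (a • v) = d a • v + a • D v)
    (e : ℕ → V) (n i : ℕ) (x : K) (hx : d x = 1) :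
    D (∑ j ∈ Finset.range n, (x ^ j / (j.factorial : K)) • katzB D e n i j) =
      ∑ j ∈ Finset.range n, (x ^ j / (j.factorial : K)) • katzB D e n (i + 1) j := by
  have hzero : d (x ^ 0 / ((Nat.factorial 0 : ℕ) : K)) = 0 := by simp
  have hsucc : ∀ j : ℕ, d (x ^ (j + 1) / (((j + 1).factorial : ℕ) : K)) =
      x ^ j / (j.factorial : K) := by
    intro j
    have h1 : ((j + 1 : ℕ) : K) ≠ 0 := by exact_mod_cast Nat.succ_ne_zero j
    have h2 : (j.factorial : K) ≠ 0 := by exact_mod_cast j.factorial_ne_zero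
    rw [div_eq_mul_inv, d.leibniz, d.leibniz_pow, d.leibniz_inv, d.map_natCast, hx,
      Nat.factorial_succ]
    push_cast at h1 ⊢
    simp
    field_simp
  -- shifting the summation index: the last term is `katzB … n = 0`
  have hshift : ∑ j ∈ Finset.range n, d (x ^ j / (j.factorial : K)) • katzB D e n i j =
      ∑ j ∈ Finset.range n, (x ^ j / (j.factorial : K)) • katzB D e n i (j + 1) := by
    have h1 := Finset.sum_range_succ
      (fun j => d (x ^ j / (j.factorial : K)) • katzB D e n i j) n
    have h2 := Finset.sum_range_succ'
      (fun j => d (x ^ j / (j.factorial : K)) • katzB D e n i j) n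
    rw [h1] at h2
    simp only [hsucc, hzero, zero_smul, add_zero, katzB_eq_zero D (map_zero D) e n i n le_rfl,
      smul_zero] at h2
    exact h2
  rw [map_sum]
  simp only [hD, katzB, smul_add, Finset.sum_add_distrib]
  rw [hshift, add_comm]

/-- Cyclic vectors exist when some element has derivative exactly `1`. -/
lemma exists_cyclic_of_one {K : Type*} [Field K] [CharZero K] (n : ℕ)
    (d : Derivation ℤ K K) (D : (Fin n → K) →+ (Fin n → K))
    (hD : ∀ (a : K) (v : Fin n → K), D (a • v) = d a • v + a • D v)
    (t : K) (ht : d t = 1) :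
    ∃ m : Fin n → K,
      Submodule.span K (Set.range fun k : Fin n => (D^[(k : ℕ)]) m) = ⊤ := by
  let e : ℕ → Fin n → K := fun i k => if i = (k : ℕ) then 1 else 0
  let b := katzB D e n
  let P : Matrix (Fin n) (Fin n) (Polynomial K) := fun i k =>
    ∑ j ∈ Finset.range n, Polynomial.C (b i j k / (j.factorial : K)) * Polynomial.X ^ j
  let w : K → ℕ → Fin n → K := fun x i =>
    ∑ j ∈ Finset.range n, (x ^ j / (j.factorial : K)) • b i j
  have heval : ∀ x, P.det.eval x = Matrix.det (fun i k : Fin n => w x i k) := by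
    intro x
    rw [← Polynomial.coe_evalRingHom, RingHom.map_det]
    refine congrArg Matrix.det ?_
    ext i k
    change (P i k).eval x = w x i k
    simp only [P, w, Polynomial.eval_finsetSum, Finset.sum_apply, Pi.smul_apply, smul_eq_mul]
    refine Finset.sum_congr rfl fun j _ => ?_
    simp
    ring
  have hw0 : (fun i k : Fin n => w 0 i k) = (1 : Matrix (Fin n) (Fin n) K) := by
    ext i k
    have hi : 0 < n := i.pos
    have hb : b i 0 = e i := by
      simp only [b]
      rw [katzB_eq_katzA _ _ _ _ 0 (by omega)]
      rfl
    simp only [w]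
    rw [Finset.sum_eq_single_of_mem 0 (by simpa using hi)
      (fun j _ hj => by simp [hj]), hb]
    simp [e, Matrix.one_apply, Fin.ext_iff]
  have hP : P.det ≠ 0 := by
    intro h
    have := heval 0
    rw [h, hw0] at this
    simp at this
  obtain ⟨k, hk⟩ : ∃ k : ℕ, P.det.eval (t + k) ≠ 0 := by
    by_contra! h
    refine hP (Polynomial.eq_zero_of_infinite_isRoot _ ?_)
    refine (Set.infinite_range_of_injective (f := fun k : ℕ => t + (k : K)) ?_).mono ?_
    · intro a b hab
      simpa using hab
    · rintro _ ⟨k, rfl⟩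
      exact h k
  have hx : d (t + k) = 1 := by simp [ht]
  set x := t + (k : K)
  have hiter : ∀ i, (D^[i]) (w x 0) = w x i := by
    intro i
    induction i with
    | zero => rfl
    | succ i ih =>
      rw [Function.iterate_succ_apply', ih]
      exact katz_step d D hD e n i x hx
  refine ⟨w x 0, ?_⟩
  simp only [hiter]
  rw [heval] at hk
  exact (Matrix.linearIndependent_rows_of_det_ne_zero hk).span_eq_top_of_card_eq_finrank' (by simp)

/-- Iterates of a rescaled connection `g • D` stay in the span of the iterates of `D` of at most
the same order. -/
lemma iterate_mem_span {K V : Type*} [Field K] [AddCommGroup V] [Module K V]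
    (d : K → K) (D : V →+ V)
    (hD : ∀ (a : K) (v : V), D (a • v) = d a • v + a • D v) (g : K) (m : V) (i : ℕ) :
    ((fun v => g • D v)^[i]) m ∈
      Submodule.span K ((fun k : ℕ => (D^[k]) m) '' Set.Iic i) := by
  induction i with
  | zero => exact Submodule.subset_span ⟨0, by simp, rfl⟩
  | succ i ih =>
    rw [Function.iterate_succ_apply']
    refine Submodule.smul_mem _ _ ?_
    have hle : Submodule.span K ((fun k : ℕ => (D^[k]) m) '' Set.Iic i) ≤
        Submodule.span K ((fun k : ℕ => (D^[k]) m) '' Set.Iic (i + 1)) :=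
      Submodule.span_mono (Set.image_mono (Set.Iic_subset_Iic.2 (Nat.le_succ i)))
    generalize ((fun v => g • D v)^[i]) m = v at ih
    induction ih using Submodule.span_induction with
    | mem v hv =>
      obtain ⟨k, hk, rfl⟩ := hv
      exact Submodule.subset_span ⟨k + 1, by simpa using hk, Function.iterate_succ_apply' _ _ _⟩
    | zero => simp
    | add u v _ _ hu hv => rw [map_add]; exact add_mem hu hv
    | smul a v hv hDv =>
      rw [hD]
      exact add_mem (Submodule.smul_mem _ _ (hle hv)) (Submodule.smul_mem _ _ hDv)

/-- The cyclic vector theorem over a field of characteristic zero with a nonzero derivation. -/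
lemma exists_cyclic {K : Type*} [Field K] [CharZero K] (n : ℕ)
    (d : K → K)
    (hd_add : ∀ a b : K, d (a + b) = d a + d b)
    (hd_leibniz : ∀ a b : K, d (a * b) = a * d b + d a * b)
    (hd_ne : d ≠ 0)
    (D : (Fin n → K) → (Fin n → K))
    (hD_add : ∀ x y, D (x + y) = D x + D y)
    (hD : ∀ (a : K) (v : Fin n → K), D (a • v) = d a • v + a • D v) :
    ∃ m : Fin n → K,
      Submodule.span K (Set.range fun k : Fin n => (D^[(k : ℕ)]) m) = ⊤ := by
  obtain ⟨f, hf⟩ : ∃ f, d f ≠ 0 := by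
    by_contra! h
    exact hd_ne (funext h)
  let δ : Derivation ℤ K K := Derivation.mk' (AddMonoidHom.mk' d hd_add).toIntLinearMap
    (fun a b => by simp [hd_leibniz, mul_comm])
  have hδ : ∀ a, δ a = d a := fun a => rfl
  let Dhom : (Fin n → K) →+ (Fin n → K) := AddMonoidHom.mk' D hD_add
  let g := (d f)⁻¹
  let Dscaled : (Fin n → K) →+ (Fin n → K) :=
    AddMonoidHom.mk' (fun v => g • D v) (fun x y => by simp [hD_add])
  obtain ⟨m, hm⟩ := exists_cyclic_of_one n (g • δ) Dscaled
    (fun a v => by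
      change g • D (a • v) = (g * d a) • v + a • g • D v
      rw [hD, smul_add, smul_smul, smul_comm g a])
    f (by change g * d f = 1; exact inv_mul_cancel₀ hf)
  refine ⟨m, top_le_iff.1 (hm ▸ Submodule.span_le.2 ?_)⟩
  rintro _ ⟨k, rfl⟩
  refine Submodule.span_mono ?_ (iterate_mem_span d Dhom hD g m k)
  rintro _ ⟨i, hi, rfl⟩
  exact ⟨⟨i, lt_of_le_of_lt hi k.2⟩, rfl⟩

lemma span_eq_top_iff_det {K : Type*} [Field K] {n : ℕ} (v : Fin n → Fin n → K) :
    Submodule.span K (Set.range v) = ⊤ ↔ Matrix.det (Matrix.of v) ≠ 0 := by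
  constructor
  · intro h
    have hli : LinearIndependent K v :=
      linearIndependent_of_top_le_span_of_card_eq_finrank h.ge (by simp)
    have := (Matrix.linearIndependent_rows_iff_isUnit (A := Matrix.of v)).1 hli
    exact ((Matrix.isUnit_iff_isUnit_det _).1 this).ne_zero
  · intro h
    exact (Matrix.linearIndependent_rows_of_det_ne_zero h).span_eq_top_of_card_eq_finrank'
      (by simp)

/-- Operator-norm convergence `Dₗ → D` gives pointwise convergence of all iterates. -/
lemma tendsto_iterate {E : Type*} [NormedAddCommGroup E]
    (D : E → E) (Dl : ℕ → E → E)
    (hD_add : ∀ x y, D (x + y) = D x + D y)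
    (hD_bdd : ∃ C : ℝ, ∀ v, ‖D v‖ ≤ C * ‖v‖)
    (ε : ℕ → ℝ) (hε : Tendsto ε atTop (nhds 0))
    (hconv : ∀ l v, ‖Dl l v - D v‖ ≤ ε l * ‖v‖) (m : E) (k : ℕ) :
    Tendsto (fun l => ((Dl l)^[k]) m) atTop (nhds ((D^[k]) m)) := by
  obtain ⟨C, hC⟩ := hD_bdd
  induction k with
  | zero => exact tendsto_const_nhds
  | succ k ih =>
    simp only [Function.iterate_succ_apply']
    rw [tendsto_iff_norm_sub_tendsto_zero] at ih ⊢
    have ih' := (tendsto_iff_norm_sub_tendsto_zero.2 ih).norm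
    have hlim : Tendsto (fun l => ε l * ‖((Dl l)^[k]) m‖ +
        C * ‖((Dl l)^[k]) m - (D^[k]) m‖) atTop (nhds 0) := by
      simpa using (hε.mul ih').add (ih.const_mul C)
    refine squeeze_zero (fun _ => norm_nonneg _) (fun l => ?_) hlim
    have hsub : ∀ x y, D x - D y = D (x - y) := fun x y =>
      ((AddMonoidHom.mk' D hD_add).map_sub x y).symm
    calc _ = ‖(Dl l (((Dl l)^[k]) m) - D (((Dl l)^[k]) m)) +
          (D (((Dl l)^[k]) m) - D ((D^[k]) m))‖ := by congr 1; abel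
      _ ≤ _ := (norm_add_le _ _).trans (add_le_add (hconv _ _) (by rw [hsub]; exact hC _))

/-- Simultaneous cyclic vectors for a convergent family of connections: if `Dₗ → D`
(bounded differential operators on `M = Ωⁿ` over a bounded nonzero derivation `d` of a
complete nontrivially normed ultrametric field `Ω` of characteristic zero), then there
is a cyclic vector `m` for `D` and cyclic vectors `mₗ` for the `Dₗ` with `mₗ → m`. -/
theorem exists_cyclic_vector_tendsto
    {Ω : Type*} [NontriviallyNormedField Ω] [CompleteSpace Ω] [IsUltrametricDist Ω]
    [CharZero Ω]
    (d : Ω → Ω)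
    (hd_add : ∀ a b : Ω, d (a + b) = d a + d b)
    (hd_leibniz : ∀ a b : Ω, d (a * b) = a * d b + d a * b)
    (hd_bdd : ∃ C : ℝ, ∀ a : Ω, ‖d a‖ ≤ C * ‖a‖)
    (hd_ne : d ≠ 0)
    (n : ℕ) (hn : 1 ≤ n)
    (D : (Fin n → Ω) → (Fin n → Ω)) (Dl : ℕ → (Fin n → Ω) → (Fin n → Ω))
    (hD_add : ∀ x y, D (x + y) = D x + D y)
    (hD_leibniz : ∀ (a : Ω) (m : Fin n → Ω), D (a • m) = d a • m + a • D m)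
    (hD_bdd : ∃ C : ℝ, ∀ v, ‖D v‖ ≤ C * ‖v‖)
    (hDl_add : ∀ l x y, Dl l (x + y) = Dl l x + Dl l y)
    (hDl_leibniz : ∀ l (a : Ω) (m : Fin n → Ω), Dl l (a • m) = d a • m + a • Dl l m)
    (hDl_bdd : ∀ l, ∃ C : ℝ, ∀ v, ‖Dl l v‖ ≤ C * ‖v‖)
    (ε : ℕ → ℝ) (hε : Tendsto ε atTop (nhds 0))
    (hconv : ∀ l v, ‖Dl l v - D v‖ ≤ ε l * ‖v‖) :
    ∃ m : Fin n → Ω,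
      Submodule.span Ω (Set.range fun k : Fin n => (D^[(k : ℕ)]) m) = ⊤ ∧
      ∃ ml : ℕ → (Fin n → Ω),
        (∀ l, Submodule.span Ω (Set.range fun k : Fin n => ((Dl l)^[(k : ℕ)]) (ml l)) = ⊤) ∧
        Tendsto ml atTop (nhds m) := by
  classical
  obtain ⟨m, hm⟩ := exists_cyclic n d hd_add hd_leibniz hd_ne D hD_add hD_leibniz
  choose c hc using fun l =>
    exists_cyclic n d hd_add hd_leibniz hd_ne (Dl l) (hDl_add l) (hDl_leibniz l)
  refine ⟨m, hm, fun l => if Submodule.span Ω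
    (Set.range fun k : Fin n => ((Dl l)^[(k : ℕ)]) m) = ⊤ then m else c l, fun l => ?_, ?_⟩
  · dsimp only
    split_ifs with h
    · exact h
    · exact hc l
  · have hlim : Tendsto (fun l => Matrix.of fun k : Fin n => ((Dl l)^[(k : ℕ)]) m) atTop
        (nhds (Matrix.of fun k : Fin n => (D^[(k : ℕ)]) m)) :=
      tendsto_pi_nhds.2 fun k => tendsto_iterate D Dl hD_add hD_bdd ε hε hconv m k
    have hdet := ((continuous_id.matrix_det).tendsto _).comp hlim
    have hev := hdet.eventually_ne ((span_eq_top_iff_det _).1 hm)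
    refine tendsto_const_nhds.congr' ?_
    filter_upwards [hev] with l hl
    rw [if_pos ((span_eq_top_iff_det _).2 hl)]
end

section
/- Let Ω be an algebraically closed field equipped with a complete, nontrivially normed, ultrametric absolute value, and let n ≥ 1. Then the spectrum map on n×n matrices over Ω is continuous for the Hausdorff distance: for every A ∈ M_n(Ω) and every ε > 0 there exists δ > 0 such that every B ∈ M_n(Ω) with ‖A − B‖ < δ (sup norm of the entries) satisfies hausdorffDist(spectrum Ω A, spectrum Ω B) < ε, where spectrum Ω A = {z ∈ Ω : A − z·1 is not invertible} is the (nonempty, finite) set of eigenvalues of A. -/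
/-!
The spectrum of a matrix is the root set of its characteristic polynomial. Since the coefficients
of `A.charpoly` are polynomial in the entries of `A`, the values `A.charpoly.eval z` and
`B.charpoly.eval z` are close, uniformly for `z` in a bounded set, when `B` is close to `A`
(`exists_delta_charpoly_eval`). All eigenvalues of matrices `B` near `A` lie in one fixed ball, by
Gershgorin (`norm_le_of_mem_spectrum`). Hence at an eigenvalue `z` of one of the two matrices the
characteristic polynomial of the other one is small; as this value is the product of the distances
from `z` to the `n` roots, some root is close to `z` (`exists_mem_spectrum_dist_le`).
-/

attribute [local instance] Matrix.normedAddCommGroup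

/-- At least one of the `n` factors of `∏ ‖z - w‖ = ‖χ_B(z)‖ < r ^ n` is at most `r`. -/
lemma exists_mem_spectrum_dist_le {Ω : Type*} [NontriviallyNormedField Ω] [IsAlgClosed Ω] {n : ℕ}
    (B : Matrix (Fin n) (Fin n) Ω) {r : ℝ} (hr : 0 < r) {z : Ω}
    (h : ‖B.charpoly.eval z‖ < r ^ n) : ∃ w ∈ spectrum Ω B, dist z w ≤ r := by
  by_contra! hcon
  have hs : B.charpoly.Splits := IsAlgClosed.splits _
  have hcard : B.charpoly.roots.card = n := by
    rw [← hs.natDegree_eq_card_roots, Matrix.charpoly_natDegree_eq_dim, Fintype.card_fin]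
  have key : ∀ s : Multiset Ω, (∀ w ∈ s, r ≤ ‖z - w‖) →
      r ^ s.card ≤ ‖(s.map (fun w => z - w)).prod‖ := by
    intro s
    induction s using Multiset.induction_on with
    | empty => simp
    | cons a s ih =>
      intro hall
      rw [Multiset.card_cons, Multiset.map_cons, Multiset.prod_cons, norm_mul, pow_succ']
      exact mul_le_mul (hall a (by simp)) (ih fun w hw => hall w (by simp [hw]))
        (by positivity) (norm_nonneg _)
  have h2 := key B.charpoly.roots fun w hw => by
    rw [← dist_eq_norm]
    exact (hcon w (Matrix.mem_spectrum_iff_isRoot_charpoly.2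
      (Polynomial.isRoot_of_mem_roots hw))).le
  rw [hcard, ← hs.eval_eq_prod_roots_of_monic B.charpoly_monic] at h2
  exact absurd h (not_lt.2 h2)

lemma norm_le_of_mem_spectrum {Ω : Type*} [NontriviallyNormedField Ω] {n : ℕ}
    (B : Matrix (Fin n) (Fin n) Ω) {z : Ω} (hz : z ∈ spectrum Ω B) :
    ‖z‖ ≤ (n + 1) * ‖B‖ := by
  have he : Module.End.HasEigenvalue (Matrix.toLin' B) z := by
    rw [Module.End.hasEigenvalue_iff_mem_spectrum, Matrix.spectrum_toLin']
    exact hz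
  obtain ⟨k, hk⟩ := eigenvalue_mem_ball he
  rw [mem_closedBall_iff_norm] at hk
  have h1 : ∑ j ∈ Finset.univ.erase k, ‖B k j‖ ≤ n * ‖B‖ := by
    calc ∑ j ∈ Finset.univ.erase k, ‖B k j‖ ≤ ∑ j, ‖B k j‖ :=
          Finset.sum_le_sum_of_subset_of_nonneg (Finset.erase_subset _ _)
            fun _ _ _ => norm_nonneg _
      _ ≤ ∑ _j : Fin n, ‖B‖ := Finset.sum_le_sum fun j _ => Matrix.norm_entry_le_entrywise_sup_norm B
      _ = n * ‖B‖ := by simp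
  have h2 : ‖B k k‖ ≤ ‖B‖ := Matrix.norm_entry_le_entrywise_sup_norm B
  have h3 := norm_le_norm_add_norm_sub' z (B k k)
  linarith

lemma continuous_charpoly_coeff {Ω : Type*} [NontriviallyNormedField Ω] {n : ℕ} (k : ℕ) :
    Continuous fun B : Matrix (Fin n) (Fin n) Ω => B.charpoly.coeff k := by
  have h : (fun B : Matrix (Fin n) (Fin n) Ω => B.charpoly.coeff k) = fun B =>
      MvPolynomial.eval (fun ij : Fin n × Fin n => B ij.1 ij.2)
        ((Matrix.charpoly.univ Ω (Fin n)).coeff k) := by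
    funext B
    have hB := Matrix.charpoly.univ_map_eval₂Hom (Fin n) (RingHom.id Ω) fun ij => B ij.1 ij.2
    have hc := congrArg (fun p => Polynomial.coeff p k) hB
    simp only [Polynomial.coeff_map] at hc
    exact hc.symm
  rw [h]
  exact (MvPolynomial.continuous_eval _).comp
    (continuous_pi fun ij => continuous_id.matrix_elem ij.1 ij.2)

/-- The characteristic polynomial depends continuously on the matrix, uniformly on bounded sets
of evaluation points. -/
lemma exists_delta_charpoly_eval {Ω : Type*} [NontriviallyNormedField Ω] {n : ℕ}
    (A : Matrix (Fin n) (Fin n) Ω) (M : ℝ) {η : ℝ} (hη : 0 < η) :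
    ∃ δ > (0 : ℝ), ∀ B : Matrix (Fin n) (Fin n) Ω, ‖A - B‖ < δ →
      ∀ z : Ω, ‖z‖ ≤ M → ‖A.charpoly.eval z - B.charpoly.eval z‖ < η := by
  let f : Matrix (Fin n) (Fin n) Ω → ℝ := fun B =>
    ∑ k ∈ Finset.range (n + 1), ‖A.charpoly.coeff k - B.charpoly.coeff k‖ * M ^ k
  have hf : Continuous f := continuous_finsetSum _ fun k _ =>
    ((continuous_const.sub (continuous_charpoly_coeff k)).norm).mul continuous_const
  have hfA : f A = 0 := by simp [f]
  obtain ⟨δ, hδ, h⟩ := Metric.continuous_iff.1 hf A η hη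
  refine ⟨δ, hδ, fun B hB z hz => ?_⟩
  have hlt : f B < η := by
    have h1 := h B (by rwa [dist_comm, dist_eq_norm])
    rw [hfA, Real.dist_eq, sub_zero] at h1
    exact (le_abs_self _).trans_lt h1
  refine lt_of_le_of_lt ?_ hlt
  have hev : ∀ C : Matrix (Fin n) (Fin n) Ω, C.charpoly.eval z =
      ∑ k ∈ Finset.range (n + 1), C.charpoly.coeff k * z ^ k := fun C => by
    rw [Polynomial.eval_eq_sum_range, Matrix.charpoly_natDegree_eq_dim, Fintype.card_fin]
  rw [hev, hev, ← Finset.sum_sub_distrib]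
  refine norm_sum_le_of_le _ fun k _ => ?_
  rw [← sub_mul, norm_mul, norm_pow]
  gcongr

/-- Continuity of the spectrum (set of eigenvalues) of matrices over a complete,
algebraically closed, nontrivially normed ultrametric field, for the Hausdorff
distance: matrices close to `A` in the entrywise sup norm have spectrum at small
Hausdorff distance from the spectrum of `A`. -/
theorem matrix_spectrum_continuous
    {Ω : Type*} [NontriviallyNormedField Ω] [IsAlgClosed Ω] [CompleteSpace Ω]
    [IsUltrametricDist Ω]
    (n : ℕ) (hn : 1 ≤ n) (A : Matrix (Fin n) (Fin n) Ω) (ε : ℝ) (hε : 0 < ε) :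
    ∃ δ > (0 : ℝ), ∀ B : Matrix (Fin n) (Fin n) Ω, ‖A - B‖ < δ →
      Metric.hausdorffDist (spectrum Ω A) (spectrum Ω B) < ε := by
  have hε2 : 0 < ε / 2 := half_pos hε
  obtain ⟨δ, hδ, h⟩ := exists_delta_charpoly_eval A ((n + 1) * (‖A‖ + 1)) (pow_pos hε2 n)
  refine ⟨min δ 1, lt_min hδ one_pos, fun B hB => ?_⟩
  have hBδ := h B (hB.trans_le (min_le_left _ _))
  have hBn : ‖B‖ ≤ ‖A‖ + 1 := by
    have h1 := norm_le_norm_add_norm_sub A B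
    have h2 := hB.trans_le (min_le_right _ _)
    linarith
  refine lt_of_le_of_lt (Metric.hausdorffDist_le_of_mem_dist hε2.le ?_ ?_) (half_lt_self hε)
  · intro z hz
    apply exists_mem_spectrum_dist_le B hε2
    have h1 := hBδ z ((norm_le_of_mem_spectrum A hz).trans (by gcongr; linarith))
    rwa [(Matrix.mem_spectrum_iff_isRoot_charpoly.1 hz).eq_zero, zero_sub, norm_neg] at h1
  · intro z hz
    apply exists_mem_spectrum_dist_le A hε2
    have h1 := hBδ z ((norm_le_of_mem_spectrum B hz).trans (by gcongr))
    rwa [(Matrix.mem_spectrum_iff_isRoot_charpoly.1 hz).eq_zero, sub_zero] at h1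
end

section
/- Let F be an algebraically closed field with a complete, nontrivially normed, ultrametric absolute value. Let P be a monic polynomial of degree n ≥ 1 over F, let a ∈ F and r > 0, and assume P has no root z with |z − a| = r. Then there exists δ > 0 such that every monic polynomial Q of degree n over F with |coeff_i(P) − coeff_i(Q)| < δ for all i has the same number of roots, counted with multiplicity, in the open disc {z ∈ F : |z − a| < r} as P. -/
open scoped Classical

/-!
For a monic `R` with no root at distance from `a` in the open interval `(s, t)` around `r`, the
ultrametric inequality gives `‖R(x)‖ = ‖x - a‖ ^ N * C` for every `x` in the annulus
`s < ‖x - a‖ < t`, where `N` is the number of roots in the disc of radius `r` and `C > 0` does not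
depend on `x` (`prod_norm_sub_eq`). So `N` can be read off from the values of `‖R‖` at two points
of the annulus at different distances from `a`; these exist because the value group of an
algebraically closed field is dense (`exists_two_norms_mem_Ioo`).

For `P` the annulus exists since `P` has finitely many roots, and there `‖P(x)‖ ≥ s ^ n`. If the
coefficients of `Q` are close to those of `P`, then `‖P(x) - Q(x)‖ < s ^ n` on the whole annulus, so
`‖Q(x)‖ = ‖P(x)‖` there. Hence `Q` has no root in the annulus either, and the two root counts agree.
-/

section Helpers

variable {F : Type*} [NontriviallyNormedField F]

/-- Density of the value group near `r`: take a root of high order of an element of norm `> 1`,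
and two consecutive powers of it. -/
lemma exists_two_norms_mem_Ioo [IsAlgClosed F] {s r t : ℝ} (hs : 0 < s) (hsr : s < r)
    (hrt : r < t) : ∃ u v : F, s < ‖u‖ ∧ ‖u‖ < ‖v‖ ∧ ‖v‖ < t := by
  have hr : 0 < r := hs.trans hsr
  obtain ⟨c, hc⟩ := NormedField.exists_one_lt_norm F
  obtain ⟨ρ, hρ1, hρ⟩ : ∃ ρ : ℝ, 1 < ρ ∧ ρ < min (r / s) (t / r) :=
    exists_between (lt_min ((one_lt_div hs).2 hsr) ((one_lt_div hr).2 hrt))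
  obtain ⟨k, hk⟩ := pow_unbounded_of_one_lt ‖c‖ hρ1
  have hk0 : k ≠ 0 := by
    rintro rfl
    simp at hk
    linarith
  obtain ⟨y, hy⟩ := IsAlgClosed.exists_pow_nat_eq c (Nat.pos_of_ne_zero hk0)
  have hyn : ‖y‖ ^ k = ‖c‖ := by rw [← norm_pow, hy]
  have hy1 : 1 < ‖y‖ := by
    rw [← hyn] at hc
    exact (one_lt_pow_iff_of_nonneg (norm_nonneg _) hk0).1 hc
  have hyρ : ‖y‖ < ρ := lt_of_pow_lt_pow_left₀ k (by linarith) (by rwa [hyn])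
  have hys : ‖y‖ * s < r := (lt_div_iff₀ hs).1 (hyρ.trans (hρ.trans_le (min_le_left _ _)))
  have hyt : ‖y‖ * r < t := (lt_div_iff₀ hr).1 (hyρ.trans (hρ.trans_le (min_le_right _ _)))
  have hy0 : 0 < ‖y‖ := by linarith
  obtain ⟨m, hm1, hm2⟩ := exists_mem_Ioc_zpow hr hy1
  have hsucc : ‖y‖ ^ (m + 1) = ‖y‖ * ‖y‖ ^ m := by
    rw [zpow_add_one₀ hy0.ne', mul_comm]
  rw [hsucc] at hm2
  refine ⟨y ^ m, y ^ (m + 1), ?_, ?_, ?_⟩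
  · rw [norm_zpow]
    exact lt_of_mul_lt_mul_left (hys.trans_le hm2) hy0.le
  · rw [norm_zpow, norm_zpow, hsucc]
    exact lt_mul_of_one_lt_left (zpow_pos hy0 m) hy1
  · rw [norm_zpow, hsucc]
    exact (mul_lt_mul_of_pos_left hm1 hy0).trans hyt

lemma norm_sub_eq_max_of_ne [IsUltrametricDist F] {x y : F} (h : ‖x‖ ≠ ‖y‖) :
    ‖x - y‖ = max ‖x‖ ‖y‖ := by
  rw [sub_eq_add_neg, IsUltrametricDist.norm_add_eq_max_of_norm_ne_norm (by rwa [norm_neg]),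
    norm_neg]

lemma norm_sub_eq_of_lt [IsUltrametricDist F] {x z a : F} (h : dist z a < ‖x - a‖) :
    ‖x - z‖ = ‖x - a‖ := by
  rw [dist_eq_norm] at h
  have := norm_sub_eq_max_of_ne h.ne'
  rw [sub_sub_sub_cancel_right, max_eq_left h.le] at this
  exact this

lemma norm_sub_eq_of_gt [IsUltrametricDist F] {x z a : F} (h : ‖x - a‖ < dist z a) :
    ‖x - z‖ = dist z a := by
  rw [dist_eq_norm] at h ⊢
  have := norm_sub_eq_max_of_ne h.ne
  rw [sub_sub_sub_cancel_right, max_eq_right h.le] at this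
  exact this

/-- The factors from points outside the disc do not depend on `x`, and each point inside the disc
contributes a factor `‖x - a‖`. -/
lemma prod_norm_sub_eq [IsUltrametricDist F] {a x : F} {r : ℝ} (S : Multiset F)
    (hin : ∀ z ∈ S, dist z a < r → dist z a < ‖x - a‖)
    (hout : ∀ z ∈ S, ¬ dist z a < r → ‖x - a‖ < dist z a) :
    (S.map fun z => ‖x - z‖).prod = ‖x - a‖ ^ (S.filter fun z => dist z a < r).card *
      ((S.filter fun z => ¬ dist z a < r).map fun z => dist z a).prod := by
  induction S using Multiset.induction_on with
  | empty => simp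
  | cons w S ih =>
    have ih' := ih (fun z hz => hin z (Multiset.mem_cons_of_mem hz))
      (fun z hz => hout z (Multiset.mem_cons_of_mem hz))
    rw [Multiset.map_cons, Multiset.prod_cons, ih']
    by_cases hw : dist w a < r
    · rw [norm_sub_eq_of_lt (hin w (Multiset.mem_cons_self w S) hw),
        Multiset.filter_cons_of_pos (p := fun z => dist z a < r) S hw,
        Multiset.filter_cons_of_neg (p := fun z => ¬ dist z a < r) S (not_not.2 hw),
        Multiset.card_cons]
      ring
    · rw [norm_sub_eq_of_gt (hout w (Multiset.mem_cons_self w S) hw),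
        Multiset.filter_cons_of_neg (p := fun z => dist z a < r) S hw,
        Multiset.filter_cons_of_pos (p := fun z => ¬ dist z a < r) S hw,
        Multiset.map_cons, Multiset.prod_cons]
      ring

lemma norm_eval_eq_prod_roots [IsAlgClosed F] {R : Polynomial F} (hR : R.Monic) (x : F) :
    ‖R.eval x‖ = (R.roots.map fun z => ‖x - z‖).prod := by
  conv_lhs => rw [(IsAlgClosed.splits R).eq_prod_roots_of_monic hR]
  rw [Polynomial.eval_multiset_prod, Multiset.map_map]
  refine (map_multiset_prod (normHom : F →*₀ ℝ) _).trans ?_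
  simp [Multiset.map_map]

/-- The form of `‖R‖` on an annulus free of roots. -/
lemma norm_eval_eq [IsAlgClosed F] [IsUltrametricDist F] {R : Polynomial F} (hR : R.Monic)
    {a x : F} {s r t : ℝ} (hsr : s < r) (hrt : r < t)
    (hroots : ∀ z ∈ R.roots, ¬ (s < dist z a ∧ dist z a < t))
    (hsx : s < ‖x - a‖) (hxt : ‖x - a‖ < t) :
    ‖R.eval x‖ = ‖x - a‖ ^ (R.roots.filter fun z => dist z a < r).card *
      ((R.roots.filter fun z => ¬ dist z a < r).map fun z => dist z a).prod := by
  rw [norm_eval_eq_prod_roots hR]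
  refine prod_norm_sub_eq _ (fun z hz h => ?_) (fun z hz h => ?_)
  · by_contra hcon
    exact hroots z hz ⟨by linarith, by linarith⟩
  · by_contra hcon
    exact hroots z hz ⟨by linarith, by linarith⟩

lemma pow_le_norm_eval [IsAlgClosed F] [IsUltrametricDist F] {R : Polynomial F} (hR : R.Monic)
    {a x : F} {s t : ℝ} (hs : 0 < s)
    (hroots : ∀ z ∈ R.roots, ¬ (s < dist z a ∧ dist z a < t))
    (hsx : s < ‖x - a‖) (hxt : ‖x - a‖ < t) :
    s ^ R.natDegree ≤ ‖R.eval x‖ := by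
  rw [norm_eval_eq_prod_roots hR, (IsAlgClosed.splits R).natDegree_eq_card_roots]
  rw [← Multiset.prod_replicate, ← Multiset.map_const']
  refine Multiset.prod_map_le_prod_map₀ _ _ (fun _ _ => hs.le) fun z hz => ?_
  by_cases h : dist z a ≤ s
  · rw [norm_sub_eq_of_lt (h.trans_lt hsx)]
    exact hsx.le
  · have htz : t ≤ dist z a := not_lt.1 fun h' => hroots z hz ⟨not_le.1 h, h'⟩
    rw [norm_sub_eq_of_gt (hxt.trans_le htz)]
    exact (not_le.1 h).le

lemma norm_eval_sub_le [IsUltrametricDist F] {P Q : Polynomial F} {n : ℕ}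
    (hP : P.natDegree = n) (hQ : Q.natDegree = n) {δ M : ℝ} (hδ : 0 ≤ δ) (hM : 1 ≤ M)
    (h : ∀ i : ℕ, ‖P.coeff i - Q.coeff i‖ < δ) {x : F} (hx : ‖x‖ ≤ M) :
    ‖P.eval x - Q.eval x‖ ≤ δ * M ^ n := by
  rw [Polynomial.eval_eq_sum_range, Polynomial.eval_eq_sum_range, hP, hQ,
    ← Finset.sum_sub_distrib]
  refine IsUltrametricDist.norm_sum_le_of_forall_le_of_nonneg (by positivity) fun i hi => ?_
  rw [← sub_mul, norm_mul, norm_pow]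
  have hin : i ≤ n := Nat.lt_succ_iff.1 (Finset.mem_range.1 hi)
  have hpow : ‖x‖ ^ i ≤ M ^ n :=
    (pow_le_pow_left₀ (norm_nonneg _) hx i).trans (pow_le_pow_right₀ hM hin)
  exact mul_le_mul (h i).le hpow (by positivity) hδ

/-- Finitely many roots, none on the circle of radius `r`, leave an annulus free. -/
lemma exists_annulus {a : F} {r : ℝ} (hr : 0 < r) (S : Multiset F)
    (h : ∀ z ∈ S, dist z a ≠ r) :
    ∃ s t : ℝ, 0 < s ∧ s < r ∧ r < t ∧ ∀ z ∈ S, ¬ (s < dist z a ∧ dist z a < t) := by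
  have hfin : ((fun z => dist z a) '' (S.toFinset : Set F)).Finite := S.toFinset.finite_toSet.image _
  have hmem : ((fun z => dist z a) '' (S.toFinset : Set F))ᶜ ∈ nhds r := by
    refine hfin.isClosed.isOpen_compl.mem_nhds ?_
    rintro ⟨z, hz, hzr⟩
    exact h z (by simpa using hz) hzr
  obtain ⟨l, u, ⟨hl, hu⟩, hsub⟩ := mem_nhds_iff_exists_Ioo_subset.1 hmem
  refine ⟨max l (r / 2), u, by positivity, max_lt hl (by linarith), hu, fun z hz hzz => ?_⟩
  exact hsub ⟨(le_max_left _ _).trans_lt hzz.1, hzz.2⟩ ⟨z, by simpa using hz, rfl⟩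

end Helpers



/-- Nonarchimedean continuity of the number of roots in an open disc: if a monic
polynomial `P` of degree `n ≥ 1` over a complete algebraically closed nontrivially
normed ultrametric field has no root on the circle `|z - a| = r`, then every monic
polynomial of degree `n` whose coefficients are close enough to those of `P` has the
same number of roots (with multiplicity) in the open disc `{z : |z - a| < r}`. -/
theorem card_roots_in_disc_locally_constant
    {F : Type*} [NontriviallyNormedField F] [CompleteSpace F] [IsAlgClosed F]
    [IsUltrametricDist F]
    (n : ℕ) (hn : 1 ≤ n) (P : Polynomial F) (hPmonic : P.Monic) (hPdeg : P.natDegree = n)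
    (a : F) (r : ℝ) (hr : 0 < r)
    (hcircle : ∀ z ∈ P.roots, dist z a ≠ r) :
    ∃ δ > (0 : ℝ), ∀ Q : Polynomial F, Q.Monic → Q.natDegree = n →
      (∀ i : ℕ, ‖P.coeff i - Q.coeff i‖ < δ) →
      (Q.roots.filter fun z => dist z a < r).card
        = (P.roots.filter fun z => dist z a < r).card := by

  obtain ⟨s, t, hs, hsr, hrt, hPr⟩ := exists_annulus hr P.roots hcircle
  obtain ⟨u, v, hsu, huv, hvt⟩ := exists_two_norms_mem_Ioo (F := F) hs hsr hrt
  have ht : 0 < t := by linarith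
  have hM : 1 ≤ 1 + t + ‖a‖ := by linarith [norm_nonneg a]
  have hM0 : 0 < (1 + t + ‖a‖) ^ n := by positivity
  -- With this `δ`, `norm_eval_sub_le` bounds `‖P(x) - Q(x)‖` on the annulus by `s ^ n / 2`, using
  -- `‖x‖ ≤ 1 + t + ‖a‖` there, while `‖P(x)‖ ≥ s ^ n`.
  refine ⟨s ^ n / 2 / (1 + t + ‖a‖) ^ n, by positivity, fun Q hQ hQdeg hclose => ?_⟩
  have hlt : ∀ x : F, s < ‖x - a‖ → ‖x - a‖ < t → ‖P.eval x - Q.eval x‖ < ‖P.eval x‖ := by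
    intro x hsx hxt
    have hxn : ‖x‖ ≤ 1 + t + ‖a‖ := by
      have := norm_add_le (x - a) a
      rw [sub_add_cancel] at this
      linarith
    have h1 := norm_eval_sub_le hPdeg hQdeg (by positivity) hM hclose hxn
    rw [div_mul_cancel₀ _ hM0.ne'] at h1
    have h2 := pow_le_norm_eval hPmonic hs hPr hsx hxt
    rw [hPdeg] at h2
    have h3 : 0 < s ^ n := by positivity
    linarith
  have hQr : ∀ z ∈ Q.roots, ¬ (s < dist z a ∧ dist z a < t) := by
    rintro z hz ⟨h1, h2⟩
    rw [dist_eq_norm] at h1 h2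
    have := hlt z h1 h2
    rw [(Polynomial.isRoot_of_mem_roots hz).eq_zero, sub_zero] at this
    exact lt_irrefl _ this
  have heq : ∀ x : F, s < ‖x - a‖ → ‖x - a‖ < t → ‖Q.eval x‖ = ‖P.eval x‖ := by
    intro x hsx hxt
    have h := hlt x hsx hxt
    have := norm_sub_eq_max_of_ne h.ne'
    rw [sub_sub_cancel, max_eq_left h.le] at this
    exact this
  have key : ∀ w : F, s < ‖w‖ → ‖w‖ < t →
      ‖w‖ ^ (Q.roots.filter fun z => dist z a < r).card *
        ((Q.roots.filter fun z => ¬ dist z a < r).map fun z => dist z a).prod =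
      ‖w‖ ^ (P.roots.filter fun z => dist z a < r).card *
        ((P.roots.filter fun z => ¬ dist z a < r).map fun z => dist z a).prod := by
    intro w h1 h2
    have hw : a + w - a = w := add_sub_cancel_left a w
    have h := heq (a + w) (by rwa [hw]) (by rwa [hw])
    rwa [norm_eval_eq hQ hsr hrt hQr (by rwa [hw]) (by rwa [hw]),
      norm_eval_eq hPmonic hsr hrt hPr (by rwa [hw]) (by rwa [hw]), hw] at h
  have hpos : ∀ S : Multiset F,
      0 < ((S.filter fun z => ¬ dist z a < r).map fun z => dist z a).prod := by
    intro S
    refine Multiset.prod_pos fun y hy => ?_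
    obtain ⟨z, hz, rfl⟩ := Multiset.mem_map.1 hy
    have := (Multiset.mem_filter.1 hz).2
    linarith
  have hu := key u hsu (huv.trans hvt)
  have hv := key v (hsu.trans huv) hvt
  have hCQ := hpos Q.roots
  have hCP := hpos P.roots
  have hu0 : 0 < ‖u‖ := hs.trans hsu
  have hv0 : 0 < ‖v‖ := hu0.trans huv
  generalize (Q.roots.filter fun z => dist z a < r).card = N at hu hv ⊢
  generalize (P.roots.filter fun z => dist z a < r).card = K at hu hv ⊢
  generalize ((Q.roots.filter fun z => ¬ dist z a < r).map fun z => dist z a).prod = C at *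
  generalize ((P.roots.filter fun z => ¬ dist z a < r).map fun z => dist z a).prod = D at *
  -- Dividing the two identities eliminates the constants.
  have hratio : (‖v‖ / ‖u‖) ^ N = (‖v‖ / ‖u‖) ^ K := by
    rw [div_pow, div_pow, div_eq_div_iff (by positivity) (by positivity)]
    refine mul_right_cancel₀ (mul_pos hCQ hCP).ne' ?_
    linear_combination (‖u‖ ^ K * D) * hv - (‖v‖ ^ K * D) * hu
  exact pow_right_injective₀ (by positivity) ((one_lt_div hu0).2 huv).ne' hratio
end

section
/- Fix a prime p. Let c₀ = C₀(ℕ, ℚ_p) be the Banach space of sequences in ℚ_p tending to 0 with the sup norm, set α_n = p^{v₂(n+1)} ∈ ℚ_p (v₂ the 2-adic valuation), and let Sh be the bounded linear operator on c₀ with (Sh x)(0) = 0 and (Sh x)(n+1) = α_n·x(n). Then for every k ≥ 1, the operator norm satisfies ‖Sh^k‖ = sup_{n ∈ ℕ} |α_n α_{n+1} ⋯ α_{n+k−1}|_p; in particular ‖Sh^k‖ ≥ |α_0 α_1 ⋯ α_{k−1}|_p ≥ p^{−2k}, and hence liminf_{k→∞} ‖Sh^k‖^{1/k} ≥ p^{−2}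 > 0. -/
open Filter ZeroAtInfty

/-!
The `k`-th power of the weighted shift moves the `n`-th coordinate to position `n + k` and multiplies
it by `α n ⋯ α (n + k - 1)` (`shift_pow_apply_add`), and its first `k` output coordinates vanish
(`shift_pow_apply_lt`). For the sup norm this gives `‖Sh ^ k‖ ≤ sup_n |α n ⋯ α (n + k - 1)|`, and
evaluating on the `n`-th basis vector gives the reverse inequality.

The product `α 0 ⋯ α (k - 1)` telescopes to `p ^ v₂(k!)`. By Legendre's formula
`v₂(k!) = k - s₂(k) ≤ k`, with `s₂` the binary digit sum, so its norm is at least `p ^ (-k)`, which is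
stronger than the required `p ^ (-2k)`. Taking `k`-th roots yields the bound on the liminf.
-/

/-- The `n`-th standard basis vector of `c₀`. -/
noncomputable def basisVec (p : ℕ) [Fact p.Prime] (n : ℕ) : C₀(ℕ, ℚ_[p]) where
  toFun := Pi.single n 1
  continuous_toFun := continuous_of_discreteTopology
  zero_at_infty' := by
    rw [Filter.cocompact_eq_cofinite]
    refine tendsto_const_nhds.congr' ?_
    filter_upwards [(Set.finite_singleton n).compl_mem_cofinite] with m hm
    exact (Pi.single_eq_of_ne (M := fun _ : ℕ => ℚ_[p]) (by simpa using hm) 1).symm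

lemma basisVec_self (p : ℕ) [Fact p.Prime] (n : ℕ) : basisVec p n n = 1 :=
  Pi.single_eq_same (M := fun _ : ℕ => ℚ_[p]) n 1

lemma c0_norm_le {p : ℕ} [Fact p.Prime] (x : C₀(ℕ, ℚ_[p])) {C : ℝ} (hC : 0 ≤ C)
    (h : ∀ n, ‖x n‖ ≤ C) : ‖x‖ ≤ C := by
  rw [← ZeroAtInftyContinuousMap.norm_toBCF_eq_norm]
  exact (BoundedContinuousFunction.norm_le hC).2 h

lemma c0_apply_le {p : ℕ} [Fact p.Prime] (x : C₀(ℕ, ℚ_[p])) (n : ℕ) : ‖x n‖ ≤ ‖x‖ := by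
  rw [← ZeroAtInftyContinuousMap.norm_toBCF_eq_norm]
  exact x.toBCF.norm_coe_le_norm n

lemma norm_basisVec_le (p : ℕ) [Fact p.Prime] (n : ℕ) : ‖basisVec p n‖ ≤ 1 := by
  refine c0_norm_le _ zero_le_one fun m => ?_
  change ‖(Pi.single n 1 : ℕ → ℚ_[p]) m‖ ≤ 1
  rcases eq_or_ne m n with rfl | h
  · simp
  · simp [Pi.single_eq_of_ne h]

section Shift

variable {p : ℕ} [Fact p.Prime] {α : ℕ → ℚ_[p]} {Sh : C₀(ℕ, ℚ_[p]) →L[ℚ_[p]] C₀(ℕ, ℚ_[p])}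

lemma shift_pow_apply_add
    (hSh : ∀ (x : C₀(ℕ, ℚ_[p])) (n : ℕ), Sh x (n + 1) = α n * x n)
    (k : ℕ) (x : C₀(ℕ, ℚ_[p])) (n : ℕ) :
    (Sh ^ k) x (n + k) = (∏ i ∈ Finset.range k, α (n + i)) * x n := by
  induction k with
  | zero => simp
  | succ k ih =>
    rw [pow_succ', mul_apply_eq_comp, ← add_assoc, hSh, ih, Finset.prod_range_succ]
    ring

lemma shift_pow_apply_lt
    (hSh0 : ∀ x : C₀(ℕ, ℚ_[p]), Sh x 0 = 0)
    (hSh : ∀ (x : C₀(ℕ, ℚ_[p])) (n : ℕ), Sh x (n + 1) = α n * x n)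
    (k : ℕ) (x : C₀(ℕ, ℚ_[p])) (m : ℕ) (hm : m < k) : (Sh ^ k) x m = 0 := by
  induction k generalizing m with
  | zero => omega
  | succ k ih =>
    rw [pow_succ', mul_apply_eq_comp]
    cases m with
    | zero => exact hSh0 _
    | succ m => rw [hSh, ih m (by omega), mul_zero]

lemma norm_prod_le_norm_shift_pow
    (hSh : ∀ (x : C₀(ℕ, ℚ_[p])) (n : ℕ), Sh x (n + 1) = α n * x n) (k n : ℕ) :
    ‖∏ i ∈ Finset.range k, α (n + i)‖ ≤ ‖Sh ^ k‖ := by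
  have h := shift_pow_apply_add hSh k (basisVec p n) n
  rw [basisVec_self, mul_one] at h
  rw [← h]
  exact (c0_apply_le _ _).trans ((Sh ^ k).unit_le_opNorm _ (norm_basisVec_le p n))

lemma norm_shift_pow
    (hSh0 : ∀ x : C₀(ℕ, ℚ_[p]), Sh x 0 = 0)
    (hSh : ∀ (x : C₀(ℕ, ℚ_[p])) (n : ℕ), Sh x (n + 1) = α n * x n) (k : ℕ) :
    ‖Sh ^ k‖ = ⨆ n : ℕ, ‖∏ i ∈ Finset.range k, α (n + i)‖ := by
  have hbdd : BddAbove (Set.range fun n : ℕ => ‖∏ i ∈ Finset.range k, α (n + i)‖) :=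
    ⟨‖Sh ^ k‖, by rintro _ ⟨n, rfl⟩; exact norm_prod_le_norm_shift_pow hSh k n⟩
  have h0 : 0 ≤ ⨆ n : ℕ, ‖∏ i ∈ Finset.range k, α (n + i)‖ :=
    Real.iSup_nonneg fun _ => norm_nonneg _
  refine le_antisymm ?_ (ciSup_le fun n => norm_prod_le_norm_shift_pow hSh k n)
  refine ContinuousLinearMap.opNorm_le_bound _ h0 fun x => ?_
  refine c0_norm_le _ (mul_nonneg h0 (norm_nonneg _)) fun m => ?_
  rcases lt_or_ge m k with hm | hm
  · rw [shift_pow_apply_lt hSh0 hSh k x m hm, norm_zero]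
    exact mul_nonneg h0 (norm_nonneg _)
  · obtain ⟨n, rfl⟩ := Nat.exists_eq_add_of_le' hm
    rw [shift_pow_apply_add hSh, norm_mul]
    exact mul_le_mul (le_ciSup hbdd n) (c0_apply_le x n) (norm_nonneg _) h0

lemma prod_weights (hα : ∀ n : ℕ, α n = (p : ℚ_[p]) ^ padicValNat 2 (n + 1)) (k : ℕ) :
    ∏ i ∈ Finset.range k, α i = (p : ℚ_[p]) ^ padicValNat 2 k.factorial := by
  induction k with
  | zero => simp
  | succ k ih =>
    rw [Finset.prod_range_succ, ih, hα, Nat.factorial_succ,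
      padicValNat.mul (Nat.succ_ne_zero k) k.factorial_ne_zero, ← pow_add, add_comm]

lemma zpow_le_norm_prod_weights
    (hα : ∀ n : ℕ, α n = (p : ℚ_[p]) ^ padicValNat 2 (n + 1)) (k : ℕ) :
    (p : ℝ) ^ (-(2 * k : ℤ)) ≤ ‖∏ i ∈ Finset.range k, α i‖ := by
  -- Legendre's formula for the prime 2
  have hleg : padicValNat 2 k.factorial ≤ k := by
    have := sub_one_mul_padicValNat_factorial (p := 2) k
    omega
  have hp : (1 : ℝ) ≤ p := by exact_mod_cast (Fact.out : p.Prime).one_lt.le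
  rw [prod_weights hα, Padic.norm_p_pow]
  exact zpow_le_zpow_right₀ hp (by omega)

end Shift

/-- Lower bound for the spectral seminorm of the weighted shift `Sh` on
`c₀ = C₀(ℕ, ℚ_p)` with weights `α n = p ^ v₂(n+1)`: the operator norm of `Sh ^ k`
equals `sup_n |α n ⋯ α (n+k-1)|`, is at least `|α 0 ⋯ α (k-1)| ≥ p ^ (-2k)`, and hence
`liminf_k ‖Sh ^ k‖ ^ (1/k) ≥ p ^ (-2) > 0`. -/
theorem shift_spectral_seminorm_lower_bound
    (p : ℕ) [Fact p.Prime]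
    (α : ℕ → ℚ_[p]) (hα : ∀ n : ℕ, α n = (p : ℚ_[p]) ^ padicValNat 2 (n + 1))
    (Sh : C₀(ℕ, ℚ_[p]) →L[ℚ_[p]] C₀(ℕ, ℚ_[p]))
    (hSh0 : ∀ x : C₀(ℕ, ℚ_[p]), Sh x 0 = 0)
    (hSh : ∀ (x : C₀(ℕ, ℚ_[p])) (n : ℕ), Sh x (n + 1) = α n * x n) :
    (∀ k : ℕ, 1 ≤ k →
      ‖Sh ^ k‖ = ⨆ n : ℕ, ‖∏ i ∈ Finset.range k, α (n + i)‖) ∧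
    (∀ k : ℕ, 1 ≤ k →
      (p : ℝ) ^ (-(2 * k : ℤ)) ≤ ‖∏ i ∈ Finset.range k, α i‖ ∧
      ‖∏ i ∈ Finset.range k, α i‖ ≤ ‖Sh ^ k‖) ∧
    ((p : ℝ) ^ (-2 : ℤ) ≤ liminf (fun k : ℕ => ‖Sh ^ k‖ ^ (1 / (k : ℝ))) atTop ∧
      0 < (p : ℝ) ^ (-2 : ℤ)) := by
  have hp : (0 : ℝ) < p := by exact_mod_cast (Fact.out : p.Prime).pos
  have hlow : ∀ k : ℕ, ‖∏ i ∈ Finset.range k, α i‖ ≤ ‖Sh ^ k‖ := fun k => by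
    simpa using norm_prod_le_norm_shift_pow hSh k 0
  refine ⟨fun k _ => norm_shift_pow hSh0 hSh k,
    fun k _ => ⟨zpow_le_norm_prod_weights hα k, hlow k⟩, ?_, by positivity⟩
  -- On `ℝ` the liminf is meaningful only for bounded sequences: `‖Sh ^ k‖ ^ (1/k) ≤ ‖Sh‖`.
  have hcob : IsCoboundedUnder (· ≥ ·) atTop (fun k : ℕ => ‖Sh ^ k‖ ^ (1 / (k : ℝ))) := by
    refine IsBoundedUnder.isCoboundedUnder_ge ⟨‖Sh‖, ?_⟩
    rw [eventually_map]
    filter_upwards [eventually_ge_atTop 1] with k hk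
    calc ‖Sh ^ k‖ ^ (1 / (k : ℝ)) ≤ (‖Sh‖ ^ k) ^ (1 / (k : ℝ)) :=
          Real.rpow_le_rpow (Sh ^ k).opNorm_nonneg (norm_pow_le' Sh hk) (by positivity)
      _ = ‖Sh‖ := by
          rw [one_div, Real.pow_rpow_inv_natCast Sh.opNorm_nonneg (by omega)]
  refine le_liminf_of_le hcob ?_
  filter_upwards [eventually_ge_atTop 1] with k hk
  calc (p : ℝ) ^ (-2 : ℤ) = (((p : ℝ) ^ (-2 : ℤ)) ^ k) ^ (1 / (k : ℝ)) := by
        rw [one_div, Real.pow_rpow_inv_natCast (by positivity) (by omega)]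
    _ ≤ ‖Sh ^ k‖ ^ (1 / (k : ℝ)) := by
        refine Real.rpow_le_rpow (by positivity) ?_ (by positivity)
        rw [← zpow_natCast, ← zpow_mul, neg_mul]
        exact (zpow_le_norm_prod_weights hα k).trans (hlow k)
end

section
/- Fix a prime p, and let E be the Banach algebra of bounded linear endomorphisms of the Banach space c₀ = C₀(ℕ, ℚ_p) of sequences in ℚ_p tending to 0 with the sup norm. Then the spectral seminorm is not continuous on E: there exist f ∈ E and a sequence (f_ℓ) in E converging to f in operator norm such that every f_ℓ is nilpotent (hence lim_k ‖f_ℓ^k‖^{1/k} = 0) while liminf_k ‖f^k‖^{1/k} ≥ p^{−2} > 0. -/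
open Filter ZeroAtInfty

/-!
The witness is the weighted backward shift `(T x) n = a n * x (n + 1)` on `c₀` with weights
`a n = p ^ v₂(n + 1)`, approximated by the shifts `T_ℓ` whose weights are those of `T`, except that
they vanish whenever `2 ^ ℓ ∣ n + 1`. The discarded weights have norm at most `p ^ (-ℓ)`, so
`‖T_ℓ - T‖ ≤ p ^ (-ℓ)`.

The `k`-th power of a weighted shift multiplies `x (n + k)` by `a n * ⋯ * a (n + k - 1)`
(`weightedShift_pow_apply`). Any `2 ^ ℓ` consecutive integers contain a multiple of `2 ^ ℓ`, so
`T_ℓ ^ (2 ^ ℓ) = 0`. On the other hand `a 0 * ⋯ * a (k - 1) = p ^ v₂(k!)` and `v₂(k!) ≤ k` by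
Legendre's formula, so evaluating `T ^ k` at the `k`-th unit vector gives `‖T ^ k‖ ≥ p ^ (-k)`.
Hence the liminf is even at least `p ^ (-1)`.
-/

namespace SpectralSeminorm

variable {p : ℕ} [Fact p.Prime]

theorem norm_apply_le (x : C₀(ℕ, ℚ_[p])) (n : ℕ) : ‖x n‖ ≤ ‖x‖ := by
  rw [← ZeroAtInftyContinuousMap.norm_toBCF_eq_norm]
  exact x.toBCF.norm_coe_le_norm n

theorem norm_le_of_forall (x : C₀(ℕ, ℚ_[p])) {C : ℝ} (hC : 0 ≤ C) (h : ∀ n, ‖x n‖ ≤ C) :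
    ‖x‖ ≤ C := by
  rw [← ZeroAtInftyContinuousMap.norm_toBCF_eq_norm]
  exact (BoundedContinuousFunction.norm_le hC).2 h

/-- The sequence `n ↦ a n * x (n + 1)`, which again tends to `0`. -/
noncomputable def shiftFun (a : ℕ → ℤ_[p]) (x : C₀(ℕ, ℚ_[p])) : C₀(ℕ, ℚ_[p]) where
  toFun n := (a n : ℚ_[p]) * x (n + 1)
  continuous_toFun := continuous_of_discreteTopology
  zero_at_infty' := by
    have hx := x.zero_at_infty'
    rw [cocompact_eq_atTop] at hx ⊢
    have hx' := (tendsto_add_atTop_iff_nat 1).2 hx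
    refine squeeze_zero_norm (fun n => ?_) (tendsto_zero_iff_norm_tendsto_zero.1 hx')
    rw [norm_mul]
    exact mul_le_of_le_one_left (norm_nonneg _) (a n).2

/-- The weighted backward shift `(T x) n = a n * x (n + 1)` on `c₀`. Taking the weights in `ℤ_p`
makes it bounded, with norm at most `1`. -/
noncomputable def weightedShift (a : ℕ → ℤ_[p]) : C₀(ℕ, ℚ_[p]) →L[ℚ_[p]] C₀(ℕ, ℚ_[p]) :=
  LinearMap.mkContinuous
    { toFun := shiftFun a
      map_add' := fun x y => by
        ext n
        exact mul_add _ _ _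
      map_smul' := fun c x => by
        ext n
        exact mul_left_comm _ _ _ } 1 (fun x => by
    refine norm_le_of_forall _ (by positivity) fun n => ?_
    change ‖(a n : ℚ_[p]) * x (n + 1)‖ ≤ _
    rw [norm_mul]
    exact mul_le_mul (a n).2 (norm_apply_le x _) (norm_nonneg _) zero_le_one)

theorem weightedShift_apply (a : ℕ → ℤ_[p]) (x : C₀(ℕ, ℚ_[p])) (n : ℕ) :
    weightedShift a x n = (a n : ℚ_[p]) * x (n + 1) := rfl

theorem norm_weightedShift_sub_le (a b : ℕ → ℤ_[p]) {C : ℝ} (hC : 0 ≤ C)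
    (h : ∀ n, ‖a n - b n‖ ≤ C) : ‖weightedShift a - weightedShift b‖ ≤ C := by
  refine ContinuousLinearMap.opNorm_le_bound _ hC fun x => ?_
  refine norm_le_of_forall _ (by positivity) fun n => ?_
  change ‖(a n : ℚ_[p]) * x (n + 1) - (b n : ℚ_[p]) * x (n + 1)‖ ≤ _
  rw [← sub_mul, norm_mul, ← PadicInt.coe_sub, PadicInt.padic_norm_e_of_padicInt]
  exact mul_le_mul (h n) (norm_apply_le x _) (norm_nonneg _) hC

theorem weightedShift_pow_apply (a : ℕ → ℤ_[p]) (k : ℕ) (x : C₀(ℕ, ℚ_[p])) (n : ℕ) :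
    (weightedShift a ^ k) x n = ((∏ i ∈ Finset.range k, a (n + i) : ℤ_[p]) : ℚ_[p]) * x (n + k) := by
  induction k generalizing x with
  | zero => simp
  | succ k ih =>
    rw [pow_succ, mul_apply_eq_comp, ih, weightedShift_apply, Finset.prod_range_succ,
      PadicInt.coe_mul, mul_assoc, add_assoc]

theorem norm_weightedShift_pow_le (a : ℕ → ℤ_[p]) (k : ℕ) : ‖weightedShift a ^ k‖ ≤ 1 := by
  refine ContinuousLinearMap.opNorm_le_bound _ zero_le_one fun x => ?_
  refine norm_le_of_forall _ (by positivity) fun n => ?_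
  rw [weightedShift_pow_apply, norm_mul, PadicInt.padic_norm_e_of_padicInt]
  exact mul_le_mul (PadicInt.norm_le_one _) (norm_apply_le x _) (norm_nonneg _) zero_le_one

/-- The `k`-th unit vector of `c₀`. -/
noncomputable def unitVec (k : ℕ) : C₀(ℕ, ℚ_[p]) where
  toFun := Pi.single k 1
  continuous_toFun := continuous_of_discreteTopology
  zero_at_infty' := by
    rw [cocompact_eq_atTop]
    refine tendsto_const_nhds.congr' ?_
    filter_upwards [eventually_gt_atTop k] with n hn
    exact (Pi.single_eq_of_ne (M := fun _ => ℚ_[p]) hn.ne' 1).symm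

theorem norm_unitVec_le (k : ℕ) : ‖(unitVec k : C₀(ℕ, ℚ_[p]))‖ ≤ 1 := by
  refine norm_le_of_forall _ zero_le_one fun n => ?_
  change ‖(Pi.single k 1 : ℕ → ℚ_[p]) n‖ ≤ 1
  by_cases h : n = k
  · subst h
    simp
  · simp [h]

theorem norm_prod_le_norm_pow (a : ℕ → ℤ_[p]) (k : ℕ) :
    ‖∏ i ∈ Finset.range k, a i‖ ≤ ‖weightedShift a ^ k‖ := by
  have h1 : (weightedShift a ^ k) (unitVec k) 0
      = ((∏ i ∈ Finset.range k, a i : ℤ_[p]) : ℚ_[p]) := by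
    have h2 : (unitVec k : C₀(ℕ, ℚ_[p])) (0 + k) = 1 := by
      rw [zero_add]
      exact Pi.single_eq_same k 1
    rw [weightedShift_pow_apply, h2, mul_one]
    simp only [zero_add]
  rw [← PadicInt.padic_norm_e_of_padicInt, ← h1]
  calc _ ≤ ‖(weightedShift a ^ k) (unitVec k)‖ := norm_apply_le _ _
    _ ≤ ‖weightedShift a ^ k‖ * ‖(unitVec k : C₀(ℕ, ℚ_[p]))‖ :=
      ContinuousLinearMap.le_opNorm _ _
    _ ≤ _ := mul_le_of_le_one_right (ContinuousLinearMap.opNorm_nonneg _) (norm_unitVec_le k)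

/-- The weights `p ^ v₂(n + 1)`. -/
noncomputable def weight (p : ℕ) [Fact p.Prime] (n : ℕ) : ℤ_[p] :=
  (p : ℤ_[p]) ^ padicValNat 2 (n + 1)

/-- The weights `p ^ v₂(n + 1)`, replaced by `0` where `v₂(n + 1) ≥ ℓ`. -/
noncomputable def truncWeight (p : ℕ) [Fact p.Prime] (ℓ n : ℕ) : ℤ_[p] :=
  if 2 ^ ℓ ∣ n + 1 then 0 else weight p n

theorem norm_truncWeight_sub_le (ℓ n : ℕ) :
    ‖truncWeight p ℓ n - weight p n‖ ≤ ((p : ℝ)⁻¹) ^ ℓ := by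
  have hp : (1 : ℝ) ≤ p := mod_cast (Fact.out : p.Prime).one_lt.le
  unfold truncWeight
  split_ifs with h
  · have hv : ℓ ≤ padicValNat 2 (n + 1) := (padicValNat_dvd_iff_le (Nat.succ_ne_zero n)).1 h
    rw [zero_sub, norm_neg, weight, norm_pow, PadicInt.norm_p]
    exact pow_le_pow_of_le_one (by positivity) (inv_le_one_of_one_le₀ hp) hv
  · rw [sub_self, norm_zero]
    positivity

theorem truncShift_pow_eq_zero (ℓ : ℕ) : weightedShift (truncWeight p ℓ) ^ 2 ^ ℓ = 0 := by
  ext x n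
  rw [weightedShift_pow_apply]
  have hpos : 0 < 2 ^ ℓ := by positivity
  have hmod := Nat.mod_lt n hpos
  -- The last element of the residue block of `n` modulo `2 ^ ℓ` carries a zero weight.
  have h0 : ∏ i ∈ Finset.range (2 ^ ℓ), truncWeight p ℓ (n + i) = 0 := by
    refine Finset.prod_eq_zero (i := 2 ^ ℓ - 1 - n % 2 ^ ℓ) (Finset.mem_range.2 (by omega)) ?_
    refine if_pos ⟨n / 2 ^ ℓ + 1, ?_⟩
    have := Nat.div_add_mod n (2 ^ ℓ)
    rw [mul_add, mul_one]
    omega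
  rw [h0]
  simp

theorem prod_weight (k : ℕ) :
    ∏ i ∈ Finset.range k, weight p i = (p : ℤ_[p]) ^ padicValNat 2 k.factorial := by
  induction k with
  | zero => simp
  | succ k ih =>
    rw [Finset.prod_range_succ, ih, weight, ← pow_add, Nat.factorial_succ,
      padicValNat.mul (Nat.succ_ne_zero k) k.factorial_ne_zero, add_comm]

theorem padicValNat_two_factorial_le (k : ℕ) : padicValNat 2 k.factorial ≤ k := by
  have h := sub_one_mul_padicValNat_factorial (p := 2) k
  omega

theorem inv_pow_le_norm_pow (k : ℕ) :
    ((p : ℝ)⁻¹) ^ k ≤ ‖weightedShift (weight p) ^ k‖ := by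
  have hp : (1 : ℝ) ≤ p := mod_cast (Fact.out : p.Prime).one_lt.le
  refine le_trans ?_ (norm_prod_le_norm_pow _ k)
  rw [prod_weight, norm_pow, PadicInt.norm_p]
  exact pow_le_pow_of_le_one (by positivity) (inv_le_one_of_one_le₀ hp)
    (padicValNat_two_factorial_le k)

end SpectralSeminorm

open SpectralSeminorm in
/-- Over `ℚ_p`, the spectral seminorm `nsp(f) = lim_k ‖f^k‖^(1/k)` is not continuous on
the Banach algebra `E` of bounded endomorphisms of `c₀ = C₀(ℕ, ℚ_p)`: there are
`f ∈ E` and a sequence `fₗ → f` in operator norm with every `fₗ` nilpotent (hence of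
spectral seminorm `0`), while `liminf_k ‖f^k‖^(1/k) ≥ p^(-2) > 0`. -/
theorem spectral_seminorm_not_continuous
    (p : ℕ) [Fact p.Prime] :
    ∃ (f : C₀(ℕ, ℚ_[p]) →L[ℚ_[p]] C₀(ℕ, ℚ_[p]))
      (fl : ℕ → (C₀(ℕ, ℚ_[p]) →L[ℚ_[p]] C₀(ℕ, ℚ_[p]))),
      Tendsto fl atTop (nhds f) ∧
      (∀ ℓ : ℕ, ∃ k : ℕ, 1 ≤ k ∧ fl ℓ ^ k = 0) ∧
      (∀ ℓ : ℕ, Tendsto (fun k : ℕ => ‖fl ℓ ^ k‖ ^ (1 / (k : ℝ))) atTop (nhds 0)) ∧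
      (p : ℝ) ^ (-2 : ℤ) ≤ liminf (fun k : ℕ => ‖f ^ k‖ ^ (1 / (k : ℝ))) atTop ∧
      0 < (p : ℝ) ^ (-2 : ℤ) := by
  have hp : (1 : ℝ) < p := mod_cast (Fact.out : p.Prime).one_lt
  have hp0 : (0 : ℝ) < p := by positivity
  refine ⟨weightedShift (weight p), fun ℓ => weightedShift (truncWeight p ℓ), ?_,
    fun ℓ => ⟨2 ^ ℓ, Nat.one_le_two_pow, truncShift_pow_eq_zero ℓ⟩, fun ℓ => ?_, ?_, by positivity⟩
  · refine (tendsto_iff_norm_sub_tendsto_zero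
      (E := C₀(ℕ, ℚ_[p]) →L[ℚ_[p]] C₀(ℕ, ℚ_[p]))).2 ?_
    exact squeeze_zero (fun _ => ContinuousLinearMap.opNorm_nonneg _)
      (fun ℓ => norm_weightedShift_sub_le _ _ (by positivity) (norm_truncWeight_sub_le ℓ))
      (tendsto_pow_atTop_nhds_zero_of_lt_one (by positivity) (inv_lt_one_of_one_lt₀ hp))
  · refine tendsto_const_nhds.congr' ?_
    filter_upwards [eventually_ge_atTop (2 ^ ℓ)] with k hk
    have hk0 : (k : ℝ) ≠ 0 := by
      have : 0 < 2 ^ ℓ := by positivity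
      exact_mod_cast (this.trans_le hk).ne'
    rw [pow_eq_zero_of_le hk (truncShift_pow_eq_zero ℓ), ContinuousLinearMap.opNorm_zero,
      Real.zero_rpow (one_div_ne_zero hk0)]
  · have hbound : ∀ k : ℕ, ‖weightedShift (weight p) ^ k‖ ^ (1 / (k : ℝ)) ≤ 1 := fun k =>
      Real.rpow_le_one (ContinuousLinearMap.opNorm_nonneg _) (norm_weightedShift_pow_le _ k)
        (by positivity)
    -- In `ℝ` the liminf is a junk value unless the sequence is bounded above.
    refine le_liminf_of_le
      (isBoundedUnder_of ⟨1, hbound⟩ : IsBoundedUnder (· ≤ ·) atTop _).isCoboundedUnder_ge ?_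
    filter_upwards [eventually_ge_atTop 1] with k hk
    calc (p : ℝ) ^ (-2 : ℤ) ≤ (p : ℝ) ^ (-1 : ℤ) := zpow_le_zpow_right₀ hp.le (by norm_num)
      _ = (p : ℝ)⁻¹ := zpow_neg_one _
      _ = (((p : ℝ)⁻¹) ^ k) ^ (1 / (k : ℝ)) := by
        rw [one_div, Real.pow_rpow_inv_natCast (by positivity) (by omega)]
      _ ≤ _ := Real.rpow_le_rpow (by positivity) (inv_pow_le_norm_pow k) (by positivity)
end
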